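/- (Syntactic Free Variable Property) For every LIF expression α, the global BRV of α is inertially cylindrified on V ∖ (I^syn(α) ∪ O^syn(α)). -/

import Mathlib

/-- A binary relation on valuations (BRV). -/
abbrev BRV (V dom : Type*) := Set ((V → dom) × (V → dom))

namespace BRV

variable {V dom : Type*}

/-- `ν1` and `ν2` agree on the set `Y` of variables. -/
def AgreeOn (ν1 ν2 : V → dom) (Y : Set V) : Prop := ∀ y ∈ Y, ν1 y = ν2 y

/-- Composition of BRVs. -/
def comp (A B : BRV V dom) : BRV V dom :=
  {p | ∃ ν3, (p.1, ν3) ∈ A ∧ (ν3, p.2) ∈ B}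

/-- Left cylindrification. -/
def cyll (Z : Set V) (A : BRV V dom) : BRV V dom :=
  {p | ∃ ν1', (ν1', p.2) ∈ A ∧ AgreeOn ν1' p.1 Zᶜ}

/-- Right cylindrification. -/
def cylr (Z : Set V) (A : BRV V dom) : BRV V dom :=
  {p | ∃ ν2', (p.1, ν2') ∈ A ∧ AgreeOn ν2' p.2 Zᶜ}

/-- Left selection. -/
def sell (x y : V) (A : BRV V dom) : BRV V dom := {p ∈ A | p.1 x = p.1 y}

/-- Right selection. -/
def selr (x y : V) (A : BRV V dom) : BRV V dom := {p ∈ A | p.2 x = p.2 y}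

/-- Left-to-right selection. -/
def sellr (x y : V) (A : BRV V dom) : BRV V dom := {p ∈ A | p.1 x = p.2 y}


end BRV


/-- A global BRV: a function from interpretations to BRVs.
`I` is the type of interpretations. -/
abbrev GBRV (V dom I : Type*) := I → BRV V dom

/-- Semantic outputs of a global BRV. -/
def Osem {V dom I : Type*} (Q : GBRV V dom I) : Set V :=
  {x | ∃ (D : I) (p : (V → dom) × (V → dom)), p ∈ Q D ∧ p.1 x ≠ p.2 x}

/-- `X` determines `Q` on `Y`. -/
def Determines {V dom I : Type*} (Q : GBRV V dom I) (X Y : Set V) : Prop :=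
  ∀ (D : I), ∀ p ∈ Q D, ∀ ν1' : V → dom, BRV.AgreeOn ν1' p.1 X →
    ∃ ν2' : V → dom, BRV.AgreeOn ν2' p.2 Y ∧ (ν1', ν2') ∈ Q D

/-- Semantic inputs of a global BRV. -/
def Isem {V dom I : Type*} (Q : GBRV V dom I) : Set V :=
  {x | ¬ Determines Q ({x}ᶜ) (Osem Q)}

-- `ν` patched with the `X`-valuation `ν'` (the values of `ν'` outside `X` are irrelevant).
open Classical in
noncomputable def patch {V dom : Type*} (ν ν' : V → dom) (X : Set V) : V → dom :=
  fun v => if v ∈ X then ν' v else ν v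

/-- A global BRV is inertially cylindrified on `X`. -/
def InertCyl {V dom I : Type*} (Q : GBRV V dom I) (X : Set V) : Prop :=
  (∀ x ∈ X, x ∉ Osem Q) ∧
  ∀ (D : I), ∀ p ∈ Q D, ∀ ν' : V → dom,
    (patch p.1 ν' X, patch p.2 ν' X) ∈ Q D

/-- A module vocabulary: each module name has an arity and an input arity. -/
structure Vocab (Name : Type*) where
  ar : Name → ℕ
  iar : Name → ℕ
  iar_le : ∀ M, iar M ≤ ar M

/-- LIF expressions over a module vocabulary. -/
inductive LIF (Name V : Type*) (voc : Vocab Name) : Type _ where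
  | idE : LIF Name V voc
  | atom (M : Name) (xs ys : List V)
      (hx : xs.length = voc.iar M) (hy : ys.length = voc.ar M - voc.iar M) :
      LIF Name V voc
  | union (a b : LIF Name V voc) : LIF Name V voc
  | inter (a b : LIF Name V voc) : LIF Name V voc
  | diff  (a b : LIF Name V voc) : LIF Name V voc
  | comp  (a b : LIF Name V voc) : LIF Name V voc
  | cyll (Z : Finset V) (a : LIF Name V voc) : LIF Name V voc
  | cylr (Z : Finset V) (a : LIF Name V voc) : LIF Name V voc
  | sellr (x y : V) (a : LIF Name V voc) : LIF Name V voc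
  | sell (x y : V) (a : LIF Name V voc) : LIF Name V voc
  | selr (x y : V) (a : LIF Name V voc) : LIF Name V voc

/-- An interpretation assigns to each module name a relation over `dom`,
represented as a set of lists. -/
abbrev Interp (Name dom : Type*) := Name → Set (List dom)

namespace LIF

variable {Name V dom : Type*} {voc : Vocab Name}

/-- The semantics of a LIF expression under an interpretation. -/
def sem (D : Interp Name dom) : LIF Name V voc → BRV V dom
  | .idE => {p | p.1 = p.2}
  | .atom M xs ys _ _ =>
      {p | (xs.map p.1 ++ ys.map p.2) ∈ D M ∧ BRV.AgreeOn p.1 p.2 {v | v ∈ ys}ᶜ}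
  | .union a b => a.sem D ∪ b.sem D
  | .inter a b => a.sem D ∩ b.sem D
  | .diff a b  => a.sem D \ b.sem D
  | .comp a b  => BRV.comp (a.sem D) (b.sem D)
  | .cyll Z a  => BRV.cyll (↑Z) (a.sem D)
  | .cylr Z a  => BRV.cylr (↑Z) (a.sem D)
  | .sellr x y a => BRV.sellr x y (a.sem D)
  | .sell x y a  => BRV.sell x y (a.sem D)
  | .selr x y a  => BRV.selr x y (a.sem D)

/-- The global BRV induced by a LIF expression. -/
def gsem (dom : Type*) (α : LIF Name V voc) : GBRV V dom (Interp Name dom) :=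
  fun D => α.sem D

end LIF

namespace LIF

variable {Name V : Type*} {voc : Vocab Name} [DecidableEq V]

/-- Syntactic outputs of a LIF expression. -/
def Osyn : LIF Name V voc → Finset V
  | .idE => ∅
  | .atom _ _ ys _ _ => ys.toFinset
  | .union a b => a.Osyn ∪ b.Osyn
  | .inter a b => a.Osyn ∩ b.Osyn
  | .diff a _  => a.Osyn
  | .comp a b  => a.Osyn ∪ b.Osyn
  | .cyll Z a  => a.Osyn ∪ Z
  | .cylr Z a  => a.Osyn ∪ Z
  | .sellr x y a => if x = y then a.Osyn \ {x} else a.Osyn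
  | .sell _ _ a  => a.Osyn
  | .selr _ _ a  => a.Osyn

/-- Syntactic inputs of a LIF expression. -/
def Isyn : LIF Name V voc → Finset V
  | .idE => ∅
  | .atom _ xs _ _ _ => xs.toFinset
  | .union a b => a.Isyn ∪ b.Isyn ∪ ((a.Osyn \ b.Osyn) ∪ (b.Osyn \ a.Osyn))
  | .inter a b => a.Isyn ∪ b.Isyn ∪ ((a.Osyn \ b.Osyn) ∪ (b.Osyn \ a.Osyn))
  | .diff a b  => a.Isyn ∪ b.Isyn ∪ ((a.Osyn \ b.Osyn) ∪ (b.Osyn \ a.Osyn))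
  | .comp a b  => a.Isyn ∪ (b.Isyn \ a.Osyn)
  | .cyll Z a  => a.Isyn \ Z
  | .cylr _ a  => a.Isyn
  | .sellr x y a =>
      if x = y then (if y ∈ a.Osyn then a.Isyn ∪ {x} else a.Isyn)
      else (if y ∈ a.Osyn then a.Isyn ∪ {x} else a.Isyn ∪ {x, y})
  | .sell x y a => if x = y then a.Isyn else a.Isyn ∪ {x, y}
  | .selr x y a => if x = y then a.Isyn else a.Isyn ∪ ({x, y} \ a.Osyn)

end LIF

/-! The inputs and outputs of an expression overlap and shift under the operators, but their union
behaves like an ordinary set of free variables: the union of those of the subexpressions and of the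
variables named by the operator. Hence a set `X` free of `α` is free of all its subexpressions, and
one shows by induction that overwriting both valuations on `X` by the same values preserves `⟦α⟧`.
For a difference `A ∖ B` one also uses that a pair of `A` agrees on `X`: an overwriting of it that
lands in `B` can then be undone by overwriting with its own values. -/

section Patch

variable {V dom : Type*} {ν μ ν' : V → dom} {X Y : Set V} {x y : V}

theorem patch_apply_of_notMem (hx : x ∉ X) : patch ν ν' X x = ν x := if_neg hx

theorem patch_apply_congr (hX : x ≠ y → x ∉ X ∧ y ∉ X) (h : ν x = μ y) :
    patch ν ν' X x = patch μ ν' X y := by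
  obtain rfl | hne := eq_or_ne x y
  · simp only [patch, h]
  · rw [patch_apply_of_notMem (hX hne).1, patch_apply_of_notMem (hX hne).2, h]

theorem BRV.AgreeOn.patch (h : AgreeOn ν μ Y) (ν' : V → dom) (X : Set V) :
    AgreeOn (patch ν ν' X) (patch μ ν' X) Y :=
  fun y hy => patch_apply_congr (fun hne => absurd rfl hne) (h y hy)

theorem patch_patch (ν ν' μ : V → dom) (X : Set V) :
    patch (patch ν ν' X) μ X = patch ν μ X := by
  funext v
  simp only [patch]
  split_ifs <;> rfl

theorem patch_eq_self (h : BRV.AgreeOn μ ν X) : patch ν μ X = ν := by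
  funext v
  by_cases hv : v ∈ X
  · simp only [patch, if_pos hv, h v hv]
  · exact patch_apply_of_notMem hv

theorem map_patch_of_notMem {l : List V} (h : ∀ v ∈ l, v ∉ X) :
    l.map (patch ν ν' X) = l.map ν :=
  List.map_congr_left fun v hv => patch_apply_of_notMem (h v hv)

end Patch

namespace BRV

variable {V dom : Type*} {A B : BRV V dom} {O P X : Set V} {x y : V}

/-- `A` is inertial outside `O`: its pairs may differ only on `O`, i.e. `O` contains the outputs
of `A`. -/
def InertialOutside (A : BRV V dom) (O : Set V) : Prop :=
  ∀ p ∈ A, AgreeOn p.1 p.2 Oᶜ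

/-- `A` is stable under overwriting both components of a pair with the same values on `X`. This is
the second half of being inertially cylindrified on `X`, for a single BRV. -/
def PatchStable (A : BRV V dom) (X : Set V) : Prop :=
  ∀ p ∈ A, ∀ ν' : V → dom, (patch p.1 ν' X, patch p.2 ν' X) ∈ A

namespace InertialOutside

theorem mono (hA : A.InertialOutside O) (hBA : B ⊆ A) (hOP : O ⊆ P) : B.InertialOutside P :=
  fun p hp v hv => hA p (hBA hp) v fun hO => hv (hOP hO)

theorem union (hA : A.InertialOutside O) (hB : B.InertialOutside P) :
    InertialOutside (A ∪ B) (O ∪ P) := by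
  rintro p (hp | hp) v hv
  · exact hA p hp v fun hO => hv (.inl hO)
  · exact hB p hp v fun hP => hv (.inr hP)

theorem inter (hA : A.InertialOutside O) (hB : B.InertialOutside P) :
    InertialOutside (A ∩ B) (O ∩ P) := by
  rintro p ⟨hpA, hpB⟩ v hv
  by_cases hO : v ∈ O
  · exact hB p hpB v fun hP => hv ⟨hO, hP⟩
  · exact hA p hpA v hO

theorem comp (hA : A.InertialOutside O) (hB : B.InertialOutside P) :
    (BRV.comp A B).InertialOutside (O ∪ P) := by
  rintro p ⟨ν, hpA, hpB⟩ v hv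
  calc
    p.1 v = ν v := hA _ hpA v fun hO => hv (.inl hO)
    _ = p.2 v := hB _ hpB v fun hP => hv (.inr hP)

theorem cyll (hA : A.InertialOutside O) (Z : Set V) : (cyll Z A).InertialOutside (O ∪ Z) := by
  rintro p ⟨ν, hpA, hν⟩ v hv
  calc
    p.1 v = ν v := (hν v fun hZ => hv (.inr hZ)).symm
    _ = p.2 v := hA _ hpA v fun hO => hv (.inl hO)

theorem cylr (hA : A.InertialOutside O) (Z : Set V) : (cylr Z A).InertialOutside (O ∪ Z) := by
  rintro p ⟨ν, hpA, hν⟩ v hv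
  calc
    p.1 v = ν v := hA _ hpA v fun hO => hv (.inl hO)
    _ = p.2 v := hν v fun hZ => hv (.inr hZ)

theorem sellr_self (hA : A.InertialOutside O) (x : V) :
    (sellr x x A).InertialOutside (O \ {x}) := by
  rintro p ⟨hpA, hx⟩ v hv
  obtain rfl | hne := eq_or_ne v x
  · exact hx
  · exact hA p hpA v fun hO => hv ⟨hO, hne⟩

end InertialOutside

namespace PatchStable

theorem union (hA : A.PatchStable X) (hB : B.PatchStable X) : PatchStable (A ∪ B) X :=
  fun p hp ν' => hp.imp (hA p · ν') (hB p · ν')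

theorem inter (hA : A.PatchStable X) (hB : B.PatchStable X) : PatchStable (A ∩ B) X :=
  fun p hp ν' => ⟨hA p hp.1 ν', hB p hp.2 ν'⟩

theorem diff (hA : A.PatchStable X) (hB : B.PatchStable X) (hAX : A.InertialOutside Xᶜ) :
    PatchStable (A \ B) X := by
  rintro p ⟨hpA, hpB⟩ ν'
  refine ⟨hA p hpA ν', fun hpatch => hpB ?_⟩
  have hp : AgreeOn p.1 p.2 X := compl_compl X ▸ hAX p hpA
  simpa only [patch_patch, patch_eq_self hp, patch_eq_self fun _ _ => rfl]
    using hB _ hpatch p.1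

theorem comp (hA : A.PatchStable X) (hB : B.PatchStable X) : (BRV.comp A B).PatchStable X := by
  rintro p ⟨ν, hpA, hpB⟩ ν'
  exact ⟨patch ν ν' X, hA _ hpA ν', hB _ hpB ν'⟩

theorem cyll (hA : A.PatchStable X) (Z : Set V) : (cyll Z A).PatchStable X := by
  rintro p ⟨ν, hpA, hν⟩ ν'
  exact ⟨patch ν ν' X, hA _ hpA ν', hν.patch ν' X⟩

theorem cylr (hA : A.PatchStable X) (Z : Set V) : (cylr Z A).PatchStable X := by
  rintro p ⟨ν, hpA, hν⟩ ν'
  exact ⟨patch ν ν' X, hA _ hpA ν', hν.patch ν' X⟩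

theorem sellr (hA : A.PatchStable X) (hX : x ≠ y → x ∉ X ∧ y ∉ X) :
    (sellr x y A).PatchStable X :=
  fun p hp ν' => ⟨hA p hp.1 ν', patch_apply_congr hX hp.2⟩

theorem sell (hA : A.PatchStable X) (hX : x ≠ y → x ∉ X ∧ y ∉ X) :
    (sell x y A).PatchStable X :=
  fun p hp ν' => ⟨hA p hp.1 ν', patch_apply_congr hX hp.2⟩

theorem selr (hA : A.PatchStable X) (hX : x ≠ y → x ∉ X ∧ y ∉ X) :
    (selr x y A).PatchStable X :=
  fun p hp ν' => ⟨hA p hp.1 ν', patch_apply_congr hX hp.2⟩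

end PatchStable

end BRV

theorem inertCyl_iff {V dom I : Type*} {Q : GBRV V dom I} {X : Set V} :
    InertCyl Q X ↔ (∀ D, (Q D).InertialOutside Xᶜ) ∧ ∀ D, (Q D).PatchStable X := by
  refine and_congr_left' ⟨fun h D p hp x hx => ?_, fun h x hx => ?_⟩
  · by_contra hne
    exact h x (not_not.mp hx) ⟨D, p, hp, hne⟩
  · rintro ⟨D, p, hp, hne⟩
    exact hne (h D p hp x (not_not.mpr hx))

namespace LIF

variable {Name V dom : Type*} {voc : Vocab Name}

theorem patchStable_sem_atom {X : Set V} (D : Interp Name dom) {M : Name} {xs ys : List V}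
    {hx : xs.length = voc.iar M} {hy : ys.length = voc.ar M - voc.iar M}
    (hxs : ∀ v ∈ xs, v ∉ X) (hys : ∀ v ∈ ys, v ∉ X) :
    ((atom M xs ys hx hy).sem D).PatchStable X := by
  rintro p ⟨hM, hagree⟩ ν'
  refine ⟨?_, hagree.patch ν' X⟩
  simpa only [map_patch_of_notMem hxs, map_patch_of_notMem hys] using hM

variable [DecidableEq V]

/-- The free variables of a LIF expression: its syntactic inputs and outputs. -/
def fvars (α : LIF Name V voc) : Finset V := α.Isyn ∪ α.Osyn

/-- The free variables contributed by a selection `x = y`. There are none when `x` and `y` coincide: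
left-to-right selection then at most moves `x` from the outputs to the inputs. -/
def selVars (x y : V) : Finset V := if x = y then ∅ else {x, y}

section FreeVariables

variable (a b : LIF Name V voc) (Z : Finset V) (x y : V)

theorem fvars_atom (M : Name) (xs ys : List V) (hx : xs.length = voc.iar M)
    (hy : ys.length = voc.ar M - voc.iar M) :
    (atom M xs ys hx hy).fvars = xs.toFinset ∪ ys.toFinset := rfl

theorem fvars_union : (union a b).fvars = a.fvars ∪ b.fvars := by
  ext v; simp only [fvars, Isyn, Osyn]; grind

theorem fvars_inter : (inter a b).fvars = a.fvars ∪ b.fvars := by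
  ext v; simp only [fvars, Isyn, Osyn]; grind

theorem fvars_diff : (diff a b).fvars = a.fvars ∪ b.fvars := by
  ext v; simp only [fvars, Isyn, Osyn]; grind

theorem fvars_comp : (comp a b).fvars = a.fvars ∪ b.fvars := by
  ext v; simp only [fvars, Isyn, Osyn]; grind

theorem fvars_cyll : (cyll Z a).fvars = a.fvars ∪ Z := by
  ext v; simp only [fvars, Isyn, Osyn]; grind

theorem fvars_cylr : (cylr Z a).fvars = a.fvars ∪ Z := by
  ext v; simp only [fvars, Isyn, Osyn]; grind

theorem fvars_sellr : (sellr x y a).fvars = a.fvars ∪ selVars x y := by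
  ext v; simp only [fvars, Isyn, Osyn, selVars]; grind

theorem fvars_sell : (sell x y a).fvars = a.fvars ∪ selVars x y := by
  ext v; simp only [fvars, Isyn, Osyn, selVars]; grind

theorem fvars_selr : (selr x y a).fvars = a.fvars ∪ selVars x y := by
  ext v; simp only [fvars, Isyn, Osyn, selVars]; grind

end FreeVariables

theorem disjoint_selVars_iff {X : Set V} {x y : V} :
    Disjoint X (selVars x y) ↔ (x ≠ y → x ∉ X ∧ y ∉ X) := by
  by_cases h : x = y <;> simp [selVars, h]

theorem inertialOutside_sem_osyn (D : Interp Name dom) (α : LIF Name V voc) :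
    (α.sem D).InertialOutside α.Osyn := by
  induction α with
  | idE => exact fun p hp v _ => congrFun hp v
  | atom M xs ys hx hy =>
    rw [Osyn, List.coe_toFinset]
    exact fun p hp => hp.2
  | union a b iha ihb => simpa only [sem, Osyn, Finset.coe_union] using iha.union ihb
  | inter a b iha ihb => simpa only [sem, Osyn, Finset.coe_inter] using iha.inter ihb
  | diff a b iha _ => exact iha.mono Set.sdiff_subset subset_rfl
  | comp a b iha ihb => simpa only [sem, Osyn, Finset.coe_union] using iha.comp ihb
  | cyll Z a ih => simpa only [sem, Osyn, Finset.coe_union] using ih.cyll Z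
  | cylr Z a ih => simpa only [sem, Osyn, Finset.coe_union] using ih.cylr Z
  | sellr x y a ih =>
    obtain rfl | hxy := eq_or_ne x y
    · simpa only [sem, Osyn, if_true, Finset.coe_sdiff, Finset.coe_singleton]
        using ih.sellr_self x
    · rw [Osyn, if_neg hxy]
      exact ih.mono (Set.sep_subset _ _) subset_rfl
  | sell x y a ih => exact ih.mono (Set.sep_subset _ _) subset_rfl
  | selr x y a ih => exact ih.mono (Set.sep_subset _ _) subset_rfl

theorem inertialOutside_sem_compl {X : Set V} (D : Interp Name dom) {α : LIF Name V voc}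
    (hX : Disjoint X α.fvars) : (α.sem D).InertialOutside Xᶜ :=
  have hO : (α.Osyn : Set V) ⊆ α.fvars := Finset.coe_subset.mpr Finset.subset_union_right
  (inertialOutside_sem_osyn D α).mono subset_rfl (hO.trans hX.subset_compl_left)

theorem patchStable_sem {X : Set V} (D : Interp Name dom) {α : LIF Name V voc}
    (hX : Disjoint X α.fvars) : (α.sem D).PatchStable X := by
  induction α with
  | idE => exact fun p hp ν' => congrArg (patch · ν' X) hp
  | atom M xs ys hx hy =>
    rw [fvars_atom, Finset.coe_union, Set.disjoint_union_right, List.coe_toFinset,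
      List.coe_toFinset, Set.disjoint_right, Set.disjoint_right] at hX
    exact patchStable_sem_atom D (fun _ => @hX.1 _) (fun _ => @hX.2 _)
  | union a b iha ihb =>
    rw [fvars_union, Finset.coe_union, Set.disjoint_union_right] at hX
    exact (iha hX.1).union (ihb hX.2)
  | inter a b iha ihb =>
    rw [fvars_inter, Finset.coe_union, Set.disjoint_union_right] at hX
    exact (iha hX.1).inter (ihb hX.2)
  | diff a b iha ihb =>
    rw [fvars_diff, Finset.coe_union, Set.disjoint_union_right] at hX
    exact (iha hX.1).diff (ihb hX.2) (inertialOutside_sem_compl D hX.1)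
  | comp a b iha ihb =>
    rw [fvars_comp, Finset.coe_union, Set.disjoint_union_right] at hX
    exact (iha hX.1).comp (ihb hX.2)
  | cyll Z a ih =>
    rw [fvars_cyll, Finset.coe_union, Set.disjoint_union_right] at hX
    exact (ih hX.1).cyll Z
  | cylr Z a ih =>
    rw [fvars_cylr, Finset.coe_union, Set.disjoint_union_right] at hX
    exact (ih hX.1).cylr Z
  | sellr x y a ih =>
    rw [fvars_sellr, Finset.coe_union, Set.disjoint_union_right] at hX
    exact (ih hX.1).sellr (disjoint_selVars_iff.mp hX.2)
  | sell x y a ih =>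
    rw [fvars_sell, Finset.coe_union, Set.disjoint_union_right] at hX
    exact (ih hX.1).sell (disjoint_selVars_iff.mp hX.2)
  | selr x y a ih =>
    rw [fvars_selr, Finset.coe_union, Set.disjoint_union_right] at hX
    exact (ih hX.1).selr (disjoint_selVars_iff.mp hX.2)

end LIF

theorem stmt9_general {Name V : Type*} {voc : Vocab Name} [DecidableEq V] (dom : Type*)
    (α : LIF Name V voc) : InertCyl (LIF.gsem dom α) (↑(α.Isyn ∪ α.Osyn))ᶜ :=
  inertCyl_iff.mpr
    ⟨fun D => LIF.inertialOutside_sem_compl D disjoint_compl_left,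
      fun D => LIF.patchStable_sem D disjoint_compl_left⟩

theorem stmt9 {Name V : Type*} [Nonempty Name] {voc : Vocab Name} [DecidableEq V]
    (dom : Type*) [Countable dom] [Infinite dom]
    (α : LIF Name V voc) :
    InertCyl (LIF.gsem dom α) (↑(α.Isyn ∪ α.Osyn))ᶜ :=
  stmt9_general dom α
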